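/- arXiv:2104.11836 — 2 statements merged into one kernel-verified Lean document; each statement's English description precedes it below -/
import Mathlib

section
/- Let R be a standard graded algebra over a field K, d > 0 a degree, and l_1,…,l_r linear forms of R. Suppose that for every word o = o_1,…,o_i with i ≤ r−2 one has dim_K (I_{o,c,s})_{d−|o|_c−1} = dim_K ((I_o : l_{i+2}) + (l_{i+1}))_{d−|o|_c−1}. Then condition (3) of property (Gr,d) holds: for every such word o, dim_K (I_{o,c,s})_{d−|o|_c−1} ≤ dim_K (I_{o,s,c})_{d−|o|_c−1}. -/
/-- Polynomial functions on a `K`-vector space `V`: the subalgebra of `V → K`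
generated by the linear functionals. -/
def polyFuns (K V : Type*) [Field K] [AddCommGroup V] [Module K V] : Subalgebra K (V → K) :=
  Algebra.adjoin K {f : V → K | ∃ φ : V →ₗ[K] K, ⇑φ = f}

/-- A subset of (the affine space of) a `K`-vector space is Zariski closed if it is the
common zero locus of a family of polynomial functions. -/
def IsZClosed (K : Type*) {V : Type*} [Field K] [AddCommGroup V] [Module K V]
    (Z : Set V) : Prop :=
  ∃ S : Set (V → K), (∀ f ∈ S, f ∈ polyFuns K V) ∧ Z = {v | ∀ f ∈ S, f v = 0}

/-- A subset is Zariski open if its complement is Zariski closed. -/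
def IsZOpen (K : Type*) {V : Type*} [Field K] [AddCommGroup V] [Module K V]
    (U : Set V) : Prop :=
  IsZClosed K Uᶜ

/-- An irreducible variety: a nonempty Zariski closed set which is not the union of two
proper closed subsets. -/
def IsIrredVariety (K : Type*) {V : Type*} [Field K] [AddCommGroup V] [Module K V]
    (W : Set V) : Prop :=
  IsZClosed K W ∧ W.Nonempty ∧
    ∀ Z₁ Z₂ : Set V, IsZClosed K Z₁ → IsZClosed K Z₂ → W ⊆ Z₁ ∪ Z₂ → (W ⊆ Z₁ ∨ W ⊆ Z₂)

/-- Auxiliary recursion for `wordIdeal`: letters are booleans, `true` standing for the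
letter `c` (colon) and `false` for the letter `s` (sum). The natural number argument keeps
track of which linear form is to be used next (0-indexed). -/
def wordIdealAux {R : Type*} [CommRing R] (l : ℕ → R) : ℕ → Ideal R → List Bool → Ideal R
  | _, I, [] => I
  | j, I, a :: o =>
      wordIdealAux l (j + 1)
        (if a then I.colon (Ideal.span {l j}) else I ⊔ Ideal.span {l j}) o

/-- The ideal `I_{l,o}` attached to a sequence of (linear) forms `l` and a word `o` in the
letters `{c, s}` (here `c = true`, `s = false`): starting from `(0)`, the `j`-th letter
either colons (`c`) or adds (`s`) the `j`-th form. -/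
def wordIdeal {R : Type*} [CommRing R] (l : ℕ → R) (o : List Bool) : Ideal R :=
  wordIdealAux l 0 ⊥ o

/-- The degree `d` component `I ∩ R_d` of an ideal `I`, as a `K`-subspace of `𝒜 d`. -/
def homComp {K R : Type*} [Field K] [CommRing R] [Algebra K R]
    (𝒜 : ℕ → Submodule K R) (I : Ideal R) (d : ℕ) : Submodule K (𝒜 d) :=
  Submodule.comap (𝒜 d).subtype (Submodule.restrictScalars K I)

/-- `dim_K (I)_d`, the dimension of the degree `d` component of the (homogeneous) ideal `I`. -/
noncomputable def homDim {K R : Type*} [Field K] [CommRing R] [Algebra K R]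
    (𝒜 : ℕ → Submodule K R) (I : Ideal R) (d : ℕ) : ℕ :=
  Module.finrank K (homComp 𝒜 I d)

/-- `dim_K (R/I)_d`, the dimension of the degree `d` component of `R/I` for a
(homogeneous) ideal `I`, computed as `dim 𝒜 d / (I ∩ 𝒜 d)`. -/
noncomputable def quotDim {K R : Type*} [Field K] [CommRing R] [Algebra K R]
    (𝒜 : ℕ → Submodule K R) (I : Ideal R) (d : ℕ) : ℕ :=
  Module.finrank K ((𝒜 d) ⧸ homComp 𝒜 I d)

/-- `macaulayDown c d = c_⟨d⟩`: if `c = C(k_d,d) + … + C(k_1,1)` is the `d`-th Macaulay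
representation of `c`, then `c_⟨d⟩ = C(k_d - 1,d) + … + C(k_1 - 1,1)`; computed greedily. -/
def macaulayDown : ℕ → ℕ → ℕ
  | _, 0 => 0
  | c, d + 1 =>
      let k := Nat.findGreatest (fun k => Nat.choose k (d + 1) ≤ c) (c + d + 1)
      Nat.choose (k - 1) (d + 1) + macaulayDown (c - Nat.choose k (d + 1)) d

/-- Property (Gr,d) for the linear forms `l 0, …, l (r-1)` (letters: `true = c`,
`false = s`): for every word `o` of length `i ≤ r`,
(1) if `m ⊄ I_o` and `i < r` then `l_{i+1} ∉ I_o`;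
(2) if `i = r` and `|o|_c < d` then `m ⊆ I_o`;
(3) if `i ≤ r - 2` then `dim (I_{o,c,s})_{d - |o|_c - 1} ≤ dim (I_{o,s,c})_{d - |o|_c - 1}`. -/
def GrProp {K R : Type*} [Field K] [CommRing R] [Algebra K R]
    (𝒜 : ℕ → Submodule K R) [GradedAlgebra 𝒜] (l : ℕ → R) (r d : ℕ) : Prop :=
  ∀ o : List Bool, o.length ≤ r →
    (¬ (HomogeneousIdeal.irrelevant 𝒜).toIdeal ≤ wordIdeal l o → o.length < r →
        l o.length ∉ wordIdeal l o) ∧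
    (o.length = r → o.count true < d →
        (HomogeneousIdeal.irrelevant 𝒜).toIdeal ≤ wordIdeal l o) ∧
    (o.length + 2 ≤ r →
        homDim 𝒜 (wordIdeal l (o ++ [true, false])) (d - o.count true - 1) ≤
          homDim 𝒜 (wordIdeal l (o ++ [false, true])) (d - o.count true - 1))

theorem colon_sup_le_sup_colon {R : Type*} [Semiring R] (I J : Ideal R) [J.IsTwoSided]
    (S : Set R) : I.colon S ⊔ J ≤ (I ⊔ J).colon S :=
  sup_le (Submodule.colon_mono le_sup_left subset_rfl)
    (Ideal.le_colon.trans (Submodule.colon_mono le_sup_right subset_rfl))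

section WordIdeal

variable {R : Type*} [CommRing R] (l : ℕ → R)

theorem wordIdealAux_append (j : ℕ) (I : Ideal R) (o p : List Bool) :
    wordIdealAux l j I (o ++ p) = wordIdealAux l (j + o.length) (wordIdealAux l j I o) p := by
  induction o generalizing j I with
  | nil => rfl
  | cons a o ih =>
    simp only [List.cons_append, wordIdealAux, List.length_cons, ih, add_assoc,
      Nat.add_comm 1]

theorem wordIdeal_append (o p : List Bool) :
    wordIdeal l (o ++ p) = wordIdealAux l o.length (wordIdeal l o) p := by
  rw [wordIdeal, wordIdealAux_append, Nat.zero_add, wordIdeal]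

theorem wordIdeal_append_sum_colon (o : List Bool) :
    wordIdeal l (o ++ [false, true]) =
      (wordIdeal l o ⊔ Ideal.span {l o.length}).colon (Ideal.span {l (o.length + 1)}) :=
  wordIdeal_append l o [false, true]

theorem colon_sup_span_le_wordIdeal_append_sum_colon (o : List Bool) :
    (wordIdeal l o).colon (Ideal.span {l (o.length + 1)}) ⊔ Ideal.span {l o.length} ≤
      wordIdeal l (o ++ [false, true]) := by
  rw [wordIdeal_append_sum_colon]
  exact colon_sup_le_sup_colon _ _ _

end WordIdeal

theorem eq_pow_of_succ_eq_mul {M : Type*} [Monoid M] {f : ℕ → M} (h0 : f 0 = 1)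
    (hsucc : ∀ n, f (n + 1) = f 1 * f n) (n : ℕ) : f n = f 1 ^ n := by
  induction n with
  | zero => rw [h0, pow_zero]
  | succ n ih => rw [hsucc, ih, ← pow_succ']

theorem finite_of_succ_eq_mul {K R : Type*} [CommSemiring K] [Semiring R] [Algebra K R]
    {𝒜 : ℕ → Submodule K R} (h0 : 𝒜 0 = 1) (hsucc : ∀ n, 𝒜 (n + 1) = 𝒜 1 * 𝒜 n)
    [Module.Finite K (𝒜 1)] (n : ℕ) : Module.Finite K (𝒜 n) := by
  rw [Module.Finite.iff_fg, eq_pow_of_succ_eq_mul h0 hsucc n]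
  exact (Module.Finite.iff_fg.mp ‹Module.Finite K (𝒜 1)›).pow n

section HomDim

variable {K R : Type*} [Field K] [CommRing R] [Algebra K R] (𝒜 : ℕ → Submodule K R)

theorem homDim_mono {I J : Ideal R} (hIJ : I ≤ J) (n : ℕ) [FiniteDimensional K (𝒜 n)] :
    homDim 𝒜 I n ≤ homDim 𝒜 J n :=
  Submodule.finrank_mono (Submodule.comap_mono hIJ)

theorem gr_condition_three_of_condition_four_general (l : ℕ → R) (o : List Bool) (n : ℕ)
    [FiniteDimensional K (𝒜 n)]
    (h4 : homDim 𝒜 (wordIdeal l (o ++ [true, false])) n ≤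
      homDim 𝒜 ((wordIdeal l o).colon (Ideal.span {l (o.length + 1)}) ⊔
        Ideal.span {l o.length}) n) :
    homDim 𝒜 (wordIdeal l (o ++ [true, false])) n ≤
      homDim 𝒜 (wordIdeal l (o ++ [false, true])) n :=
  h4.trans (homDim_mono 𝒜 (colon_sup_span_le_wordIdeal_append_sum_colon l o) n)

end HomDim

/-- If for every word `o` with `|o| ≤ r - 2` one has
`dim (I_{o,c,s})_{d-|o|_c-1} = dim ((I_o : l_{i+2}) + (l_{i+1}))_{d-|o|_c-1}`,
then condition (3) of property (Gr,d) holds: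
`dim (I_{o,c,s})_{d-|o|_c-1} ≤ dim (I_{o,s,c})_{d-|o|_c-1}` for all such `o`. -/
theorem gr_condition_three_of_condition_four
    {K R : Type*} [Field K] [CommRing R] [Algebra K R]
    (𝒜 : ℕ → Submodule K R) [GradedAlgebra 𝒜]
    (h0 : 𝒜 0 = (1 : Submodule K R)) (hstd : ∀ n, 𝒜 (n + 1) = 𝒜 1 * 𝒜 n)
    [FiniteDimensional K (𝒜 1)] (d r : ℕ) (hd : 0 < d)
    (l : ℕ → R) (hl : ∀ j < r, l j ∈ 𝒜 1)
    (h4 : ∀ o : List Bool, o.length + 2 ≤ r →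
      homDim 𝒜 (wordIdeal l (o ++ [true, false])) (d - o.count true - 1) =
        homDim 𝒜 ((wordIdeal l o).colon (Ideal.span {l (o.length + 1)}) ⊔
          Ideal.span {l o.length}) (d - o.count true - 1)) :
    ∀ o : List Bool, o.length + 2 ≤ r →
      homDim 𝒜 (wordIdeal l (o ++ [true, false])) (d - o.count true - 1) ≤
        homDim 𝒜 (wordIdeal l (o ++ [false, true])) (d - o.count true - 1) := by
  intro o ho
  have := finite_of_succ_eq_mul h0 hstd (d - o.count true - 1)
  exact gr_condition_three_of_condition_four_general 𝒜 l o _ (h4 o ho).le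
end

section
/- Let R = K[X_1,…,X_n]/J be a standard graded algebra over an infinite field K, let V ⊆ 𝔸(R_1) be an irreducible variety such that V^r is irreducible, and let o = o_1,…,o_i be a word in {c,s} with 0 ≤ i ≤ r. Then there exists a nonempty Zariski open subset U ⊆ V^r such that for every r-tuple l = (l_1,…,l_r) ∈ U and every permutation σ of {1,…,r}, the Hilbert function of I_{σ(l),o} equals the Hilbert function of I_{l,o}; that is, the Hilbert function of I_{l,o} is independent of the order of the linear forms. -/
/-!
Let `A` be the coordinate ring of the irreducible variety `Z` of tuples of forms; it is a domain,
and the forms lift to universal polynomials over `A` that specialize to each tuple of `Z`. An ideal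
`I` of `A[X]` has, after inverting one nonzero `f : A`, the `A`-span of its standard monomials as a
complement: by Dickson's lemma finitely many elements of `I` carry all minimal leading monomials,
and `f` is the product of their leading coefficients. Where `f` does not vanish, such a complement
survives specialization, and the complement for `I + (l)` makes `I : l` commute with
specialization. So every ideal `I_{l,o}` over a nonempty open subset of `Z` comes from one
universal ideal and has the same monomials as a homogeneous complement, which fixes its Hilbert
function. Permuting the forms preserves `Z`, and by irreducibility the finitely many translates of
this open set intersect.
-/

section IsComplAway

variable {A M : Type*} [CommRing A] [AddCommGroup M] [Module A M]

/-- The saturation `P : f^∞`: the elements that some power of `f` multiplies into `P`. It is the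
preimage in `M` of the localization `P_f`. -/
def powSaturation (f : A) (P : Submodule A M) : Submodule A M where
  carrier := {x | ∃ N : ℕ, f ^ N • x ∈ P}
  add_mem' := by
    rintro x y ⟨i, hx⟩ ⟨j, hy⟩
    refine ⟨i + j, ?_⟩
    rw [smul_add, pow_add]
    refine P.add_mem ?_ ?_
    · rw [mul_comm, mul_smul]
      exact P.smul_mem _ hx
    · rw [mul_smul]
      exact P.smul_mem _ hy
  zero_mem' := ⟨0, by simp⟩
  smul_mem' := by
    rintro a x ⟨i, hx⟩
    exact ⟨i, by rw [smul_comm]; exact P.smul_mem a hx⟩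

lemma le_powSaturation (f : A) (P : Submodule A M) : P ≤ powSaturation f P :=
  fun x hx => ⟨0, by simpa using hx⟩

lemma mem_powSaturation_of_smul_mem {f : A} {P : Submodule A M} {x : M}
    (h : f • x ∈ powSaturation f P) : x ∈ powSaturation f P := by
  obtain ⟨N, hN⟩ := h
  exact ⟨N + 1, by rwa [pow_succ, mul_smul]⟩

lemma smul_powSaturation_le (f : A) (𝔞 : Ideal A) (P : Submodule A M) :
    𝔞 • powSaturation f P ≤ powSaturation f (𝔞 • P) := by
  refine Submodule.smul_le.2 ?_
  rintro a ha x ⟨N, hN⟩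
  exact ⟨N, by rw [smul_comm]; exact Submodule.smul_mem_smul ha hN⟩

/-- The submodules `P` and `Q` become complementary after inverting `f`, and are disjoint already
in `M`. For a domain `A` this is how generic freeness of `M ⧸ P` is used: `Q` is a free module of
representatives. -/
structure IsComplAway (f : A) (P Q : Submodule A M) : Prop where
  disjoint : Disjoint P Q
  powSaturation_sup_eq_top : powSaturation f (P ⊔ Q) = ⊤

namespace IsComplAway

variable {f : A} {P Q : Submodule A M}

-- For `q = 0` this says that `P ∩ 𝔞M = 𝔞P` up to powers of `f`, i.e. `Tor₁(A/𝔞, M/P)_f = 0`.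
lemma mem_powSaturation_smul_of_sub_mem (h : IsComplAway f P Q) {𝔞 : Ideal A} {p q : M}
    (hp : p ∈ P) (hq : q ∈ Q) (hpq : p - q ∈ 𝔞 • (⊤ : Submodule A M)) :
    p ∈ powSaturation f (𝔞 • P) := by
  rw [← h.powSaturation_sup_eq_top] at hpq
  obtain ⟨N, hN⟩ := smul_powSaturation_le f 𝔞 _ hpq
  rw [Submodule.smul_sup] at hN
  obtain ⟨u, hu, v, hv, huv⟩ := Submodule.mem_sup.1 hN
  have hcancel : f ^ N • p - u = f ^ N • q + v := by
    rw [smul_sub] at huv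
    rw [sub_eq_iff_eq_add, add_assoc, add_comm v, huv, add_sub_cancel]
  have hzero : f ^ N • p - u = 0 := by
    refine Submodule.disjoint_def.1 h.disjoint _ ?_ ?_
    · exact P.sub_mem (P.smul_mem _ hp) (Submodule.smul_le_right hu)
    · rw [hcancel]
      exact Q.add_mem (Q.smul_mem _ hq) (Submodule.smul_le_right hv)
  exact ⟨N, by rwa [sub_eq_zero.1 hzero]⟩

end IsComplAway

section Specialization

variable {B M' : Type*} [CommRing B] [AddCommGroup M'] [Module B M'] {ev : A →+* B}
  [RingHomSurjective ev] (φ : M →ₛₗ[ev] M') {f : A}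

lemma map_powSaturation (hf : IsUnit (ev f)) (P : Submodule A M) :
    (powSaturation f P).map φ = P.map φ := by
  refine le_antisymm ?_ (Submodule.map_mono (le_powSaturation f P))
  rintro _ ⟨x, ⟨N, hN⟩, rfl⟩
  rw [← Submodule.smul_mem_iff_of_isUnit _ (hf.pow N), ← map_pow, ← map_smulₛₗ]
  exact Submodule.mem_map_of_mem hN

lemma map_ker_smul_eq_bot (P : Submodule A M) : (RingHom.ker ev • P).map φ = ⊥ := by
  rw [eq_bot_iff, Submodule.map_le_iff_le_comap, Submodule.smul_le]
  intro a ha x _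
  rw [Submodule.mem_comap, map_smulₛₗ, RingHom.mem_ker.1 ha, zero_smul]
  exact Submodule.zero_mem _

lemma IsComplAway.isCompl_map {P Q : Submodule A M} (h : IsComplAway f P Q)
    (hf : IsUnit (ev f)) (hφ : Function.Surjective φ)
    (hker : ∀ x, φ x = 0 → x ∈ RingHom.ker ev • (⊤ : Submodule A M)) :
    IsCompl (P.map φ) (Q.map φ) := by
  constructor
  · refine Submodule.disjoint_def.2 ?_
    rintro _ ⟨p, hp, rfl⟩ ⟨q, hq, hqp⟩
    have hp' : p ∈ powSaturation f (RingHom.ker ev • P) :=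
      h.mem_powSaturation_smul_of_sub_mem hp hq (hker _ (by rw [map_sub, hqp, sub_self]))
    have := Submodule.mem_map_of_mem (f := φ) hp'
    rwa [map_powSaturation φ hf, map_ker_smul_eq_bot, Submodule.mem_bot] at this
  · rw [codisjoint_iff, ← Submodule.map_sup, ← map_powSaturation φ hf,
      h.powSaturation_sup_eq_top, Submodule.map_top, LinearMap.range_eq_top.2 hφ]

end Specialization

end IsComplAway

section GenericFreeness

open MvPolynomial MonomialOrder

lemma exists_finset_subset_forall_exists_le {α : Type*} [PartialOrder α] [WellQuasiOrderedLE α]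
    (s : Set α) : ∃ t : Finset α, (∀ b ∈ t, b ∈ s) ∧ ∀ a ∈ s, ∃ b ∈ t, b ≤ a := by
  have hfin : {a | Minimal (· ∈ s) a}.Finite :=
    WellQuasiOrderedLE.finite_of_isAntichain (setOfPred_minimal_antichain _)
  refine ⟨hfin.toFinset, fun a ha => (hfin.mem_toFinset.1 ha).1, fun a ha => ?_⟩
  obtain ⟨b, hba, hb⟩ := exists_minimal_le_of_wellFoundedLT (· ∈ s) a ha
  exact ⟨b, hfin.mem_toFinset.2 hb, hba⟩

variable {σ A : Type*} [CommRing A] (m : MonomialOrder σ)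

lemma sub_leadingTerm_mem_restrictSupport (p : MvPolynomial σ A) :
    p - m.leadingTerm p ∈ restrictSupport A {e | e ≺[m] m.degree p} := by
  classical
  refine (mem_restrictSupport_iff A).2 fun e he => ?_
  have hcoeff : coeff e p - coeff e (m.leadingTerm p) ≠ 0 := by
    simpa using he
  have hne : m.degree p ≠ e := by
    rintro rfl
    simp [MonomialOrder.leadingTerm, MonomialOrder.leadingCoeff] at hcoeff
  rw [MonomialOrder.leadingTerm, coeff_monomial, if_neg hne, sub_zero] at hcoeff
  exact (m.le_degree (mem_support_iff.2 hcoeff)).lt_of_ne fun h => hne (m.toSyn.injective h).symm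

lemma powSaturation_eq_top_of_leadingCoeff_dvd {f : A} {P : Submodule A (MvPolynomial σ A)}
    (h : ∀ e, ∃ p ∈ P, m.degree p = e ∧ m.leadingCoeff p ∣ f) : powSaturation f P = ⊤ := by
  have hmonomial : ∀ s : m.syn, monomial (m.toSyn.symm s) (1 : A) ∈ powSaturation f P := by
    intro s
    induction s using WellFoundedLT.induction with
    | ind s ih =>
    obtain ⟨p, hp, hdeg, c, hc⟩ := h (m.toSyn.symm s)
    have htail : p - m.leadingTerm p ∈ powSaturation f P := by
      refine (?_ : restrictSupport A _ ≤ _) (sub_leadingTerm_mem_restrictSupport m p)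
      rw [restrictSupport_eq_span, Submodule.span_le]
      rintro _ ⟨e, he, rfl⟩
      simpa using ih (m.toSyn e) (by simpa [hdeg] using he)
    have hlead : f • monomial (m.toSyn.symm s) (1 : A) = c • (p - (p - m.leadingTerm p)) := by
      rw [sub_sub_cancel, MonomialOrder.leadingTerm, hdeg, smul_monomial, smul_monomial, hc]
      simp [mul_comm]
    refine mem_powSaturation_of_smul_mem ?_
    rw [hlead]
    exact Submodule.smul_mem _ _ (Submodule.sub_mem _ (le_powSaturation f P hp) htail)
  rw [eq_top_iff, ← restrictSupport_univ, restrictSupport_eq_span, Submodule.span_le]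
  rintro _ ⟨e, -, rfl⟩
  simpa using hmonomial (m.toSyn e)

/-- The exponents of the leading monomials of the nonzero elements of `I`. -/
def leadingExponents (I : Ideal (MvPolynomial σ A)) : Set (σ →₀ ℕ) :=
  {e | ∃ p ∈ I, p ≠ 0 ∧ m.degree p = e}

lemma disjoint_restrictSupport_compl_leadingExponents (I : Ideal (MvPolynomial σ A)) :
    Disjoint (I.restrictScalars A) (restrictSupport A (leadingExponents m I)ᶜ) := by
  refine Submodule.disjoint_def.2 fun p hpI hp => ?_
  by_contra hp0
  exact (mem_restrictSupport_iff A).1 hp (m.degree_mem_support hp0) ⟨p, hpI, hp0, rfl⟩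

variable [IsDomain A]

lemma exists_ne_zero_forall_leadingCoeff_dvd [Finite σ] (I : Ideal (MvPolynomial σ A)) :
    ∃ f : A, f ≠ 0 ∧ ∀ e ∈ leadingExponents m I,
      ∃ p ∈ I, m.degree p = e ∧ m.leadingCoeff p ∣ f := by
  classical
  obtain ⟨t, ht, hmin⟩ := exists_finset_subset_forall_exists_le (leadingExponents m I)
  choose! G hGI hG0 hGdeg using ht
  refine ⟨∏ e ∈ t, m.leadingCoeff (G e),
    Finset.prod_ne_zero_iff.2 fun e he => m.leadingCoeff_ne_zero_iff.2 (hG0 e he), fun e he => ?_⟩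
  obtain ⟨e₀, he₀, hle⟩ := hmin e he
  refine ⟨monomial (e - e₀) 1 * G e₀, I.mul_mem_left _ (hGI e₀ he₀), ?_, ?_⟩
  · rw [m.degree_mul (by simp) (hG0 e₀ he₀), m.degree_monomial, hGdeg e₀ he₀, if_neg one_ne_zero,
      tsub_add_cancel_of_le hle]
  · rw [m.leadingCoeff_mul, m.leadingCoeff_monomial, one_mul]
    exact Finset.dvd_prod_of_mem _ he₀

theorem exists_isComplAway_restrictSupport [Finite σ] (I : Ideal (MvPolynomial σ A)) :
    ∃ f : A, f ≠ 0 ∧ ∃ s : Set (σ →₀ ℕ),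
      IsComplAway f (I.restrictScalars A) (restrictSupport A s) := by
  classical
  obtain ⟨n, ⟨φ⟩⟩ := Finite.exists_equiv_fin σ
  let _ : LinearOrder σ := LinearOrder.lift' φ φ.injective
  let m : MonomialOrder σ := MonomialOrder.lex
  obtain ⟨f, hf, hdvd⟩ := exists_ne_zero_forall_leadingCoeff_dvd m I
  refine ⟨f, hf, (leadingExponents m I)ᶜ,
    disjoint_restrictSupport_compl_leadingExponents m I,
    powSaturation_eq_top_of_leadingCoeff_dvd m fun e => ?_⟩
  by_cases he : e ∈ leadingExponents m I
  · obtain ⟨p, hp, hpe⟩ := hdvd e he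
    exact ⟨p, Submodule.mem_sup_left hp, hpe⟩
  · refine ⟨monomial e 1, Submodule.mem_sup_right ?_, by simp [m.degree_monomial], by simp⟩
    exact (monomial_mem_restrictSupport A).2 (Or.inl he)

end GenericFreeness

section Colon

variable {A S : Type*} [CommRing A] [CommRing S] [Algebra A S]

lemma smul_restrictScalars_sup_span_singleton (𝔞 : Ideal A) (I : Ideal S) (l : S) :
    𝔞 • (I ⊔ Ideal.span {l}).restrictScalars A =
      𝔞 • I.restrictScalars A ⊔ (𝔞 • (⊤ : Submodule A S)).map (LinearMap.mul A S l) := by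
  rw [Submodule.restrictScalars_sup, Submodule.smul_sup, Submodule.map_smul'', Submodule.map_top,
    Ideal.range_mul]

lemma IsComplAway.mem_powSaturation_colon_sup {f : A} {I : Ideal S} {l : S} {Q : Submodule A S}
    (h : IsComplAway f ((I ⊔ Ideal.span {l}).restrictScalars A) Q) {𝔞 : Ideal A} {p : S}
    (hp : p * l ∈ I.restrictScalars A ⊔ 𝔞 • (⊤ : Submodule A S)) :
    p ∈ powSaturation f
      ((I.colon (Ideal.span {l})).restrictScalars A ⊔ 𝔞 • (⊤ : Submodule A S)) := by
  obtain ⟨b, hb, c, hc, hbc⟩ := Submodule.mem_sup.1 hp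
  have hc_mem : c ∈ I ⊔ Ideal.span {l} := by
    rw [eq_sub_of_add_eq' hbc]
    refine sub_mem (Submodule.mem_sup_right ?_) (Submodule.mem_sup_left hb)
    exact Ideal.mul_mem_left _ _ (Ideal.mem_span_singleton_self l)
  obtain ⟨N, hN⟩ := h.mem_powSaturation_smul_of_sub_mem (q := 0) hc_mem Q.zero_mem
    (by rwa [sub_zero])
  rw [smul_restrictScalars_sup_span_singleton] at hN
  obtain ⟨u, hu, _, ⟨w, hw, rfl⟩, huw⟩ := Submodule.mem_sup.1 hN
  have hcolon : f ^ N • p - w ∈ I.colon (Ideal.span {l}) := by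
    have hmul : (f ^ N • p - w) * l = f ^ N • b + u := by
      rw [sub_mul, smul_mul_assoc, ← hbc, smul_add, ← huw, LinearMap.mul_apply']
      ring
    rw [Ideal.mem_colon_span_singleton, hmul]
    exact (I.restrictScalars A).add_mem (Submodule.smul_mem _ _ hb) (Submodule.smul_le_right hu)
  exact ⟨N, Submodule.mem_sup.2 ⟨_, hcolon, w, hw, sub_add_cancel _ _⟩⟩

end Colon

section MvPolynomialSpecialization

open MvPolynomial

variable {σ A B : Type*} [CommRing A] [CommRing B] (ev : A →+* B)

/-- `MvPolynomial.map ev` as an `ev`-semilinear map, so that it acts on `A`-submodules. -/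
noncomputable def mapSemilinear : MvPolynomial σ A →ₛₗ[ev] MvPolynomial σ B where
  __ := MvPolynomial.map ev
  map_smul' a p := by simp [smul_eq_C_mul]

lemma mapSemilinear_apply (p : MvPolynomial σ A) : mapSemilinear ev p = map ev p := rfl

variable {ev} in
lemma mem_ker_smul_top_of_map_eq_zero {p : MvPolynomial σ A} (hp : map ev p = 0) :
    p ∈ RingHom.ker ev • (⊤ : Submodule A (MvPolynomial σ A)) := by
  rw [Ideal.smul_top_eq_map, Submodule.restrictScalars_mem, algebraMap_eq, ← ker_map]
  exact hp

variable [RingHomSurjective ev]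

lemma map_mapSemilinear_restrictSupport (s : Set (σ →₀ ℕ)) :
    (restrictSupport A s).map (mapSemilinear ev) = restrictSupport B s := by
  rw [restrictSupport_eq_span, restrictSupport_eq_span, Submodule.map_span, Set.image_image]
  simp [mapSemilinear_apply]

lemma map_mapSemilinear_restrictScalars (I : Ideal (MvPolynomial σ A)) :
    (I.restrictScalars A).map (mapSemilinear ev) = (I.map (map ev)).restrictScalars B := by
  ext q
  rw [Submodule.restrictScalars_mem,
    Ideal.mem_map_iff_of_surjective _ (map_surjective ev RingHomSurjective.is_surjective)]
  rfl

variable {ev} {f : A}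

lemma IsComplAway.isCompl_restrictSupport (hf : IsUnit (ev f)) {I : Ideal (MvPolynomial σ A)}
    {s : Set (σ →₀ ℕ)} (h : IsComplAway f (I.restrictScalars A) (restrictSupport A s)) :
    IsCompl ((I.map (map ev)).restrictScalars B) (restrictSupport B s) := by
  rw [← map_mapSemilinear_restrictScalars ev, ← map_mapSemilinear_restrictSupport ev]
  exact h.isCompl_map (mapSemilinear ev) hf (map_surjective ev RingHomSurjective.is_surjective)
    fun _ => mem_ker_smul_top_of_map_eq_zero

lemma IsComplAway.map_colon (hf : IsUnit (ev f)) {I : Ideal (MvPolynomial σ A)}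
    {l : MvPolynomial σ A} {Q : Submodule A (MvPolynomial σ A)}
    (h : IsComplAway f ((I ⊔ Ideal.span {l}).restrictScalars A) Q) :
    (I.colon (Ideal.span {l})).map (map ev) =
      (I.map (map ev)).colon (Ideal.span {map ev l}) := by
  have hsurj : Function.Surjective (map ev : MvPolynomial σ A →+* _) :=
    map_surjective ev RingHomSurjective.is_surjective
  refine le_antisymm (Ideal.map_le_iff_le_comap.2 fun p hp => ?_) fun q hq => ?_
  · rw [Ideal.mem_comap, Ideal.mem_colon_span_singleton, ← map_mul]
    exact Ideal.mem_map_of_mem _ (Ideal.mem_colon_span_singleton.1 hp)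
  · obtain ⟨p, rfl⟩ := hsurj q
    rw [Ideal.mem_colon_span_singleton, ← map_mul,
      Ideal.mem_map_iff_of_surjective _ hsurj] at hq
    obtain ⟨b, hb, hbp⟩ := hq
    have hpl : p * l ∈ I.restrictScalars A ⊔ RingHom.ker ev • (⊤ : Submodule A _) :=
      Submodule.mem_sup.2 ⟨b, hb, p * l - b,
        mem_ker_smul_top_of_map_eq_zero (by rw [map_sub, hbp, sub_self]), add_sub_cancel _ _⟩
    have hmem := Submodule.mem_map_of_mem (f := mapSemilinear ev)
      (h.mem_powSaturation_colon_sup hpl)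
    rwa [map_powSaturation _ hf, Submodule.map_sup, map_ker_smul_eq_bot, sup_bot_eq,
      map_mapSemilinear_restrictScalars] at hmem

end MvPolynomialSpecialization

section WordIdeal

section Specialization

open MvPolynomial

variable {σ A B : Type*} [Finite σ] [CommRing A] [IsDomain A] [CommRing B]

theorem exists_map_wordIdealAux_eq (L : ℕ → MvPolynomial σ A) (j : ℕ)
    (I : Ideal (MvPolynomial σ A)) (o : List Bool) :
    ∃ f : A, f ≠ 0 ∧ ∀ (ev : A →+* B) [RingHomSurjective ev], IsUnit (ev f) →
      (wordIdealAux L j I o).map (map ev) =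
        wordIdealAux (fun t => map ev (L t)) j (I.map (map ev)) o := by
  induction o generalizing j I with
  | nil => exact ⟨1, one_ne_zero, fun ev _ _ => rfl⟩
  | cons a o ih =>
    cases a with
    | false =>
      obtain ⟨f, hf, hmap⟩ := ih (j + 1) (I ⊔ Ideal.span {L j})
      refine ⟨f, hf, fun ev _ hev => ?_⟩
      rw [wordIdealAux, wordIdealAux, if_neg Bool.false_ne_true, if_neg Bool.false_ne_true,
        hmap ev hev, Ideal.map_sup, Ideal.map_span, Set.image_singleton]
    | true =>
      obtain ⟨f₁, hf₁, hmap⟩ := ih (j + 1) (I.colon (Ideal.span {L j}))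
      obtain ⟨f₂, hf₂, s, hcompl⟩ := exists_isComplAway_restrictSupport (I ⊔ Ideal.span {L j})
      refine ⟨f₁ * f₂, mul_ne_zero hf₁ hf₂, fun ev _ hev => ?_⟩
      rw [map_mul, IsUnit.mul_iff] at hev
      rw [wordIdealAux, wordIdealAux, if_pos rfl, if_pos rfl, hmap ev hev.1,
        hcompl.map_colon hev.2]

theorem exists_isCompl_wordIdealAux (L : ℕ → MvPolynomial σ A) (j : ℕ)
    (I : Ideal (MvPolynomial σ A)) (o : List Bool) :
    ∃ f : A, f ≠ 0 ∧ ∃ s : Set (σ →₀ ℕ), ∀ (ev : A →+* B) [RingHomSurjective ev], IsUnit (ev f) →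
      IsCompl ((wordIdealAux (fun t => map ev (L t)) j (I.map (map ev)) o).restrictScalars B)
        (restrictSupport B s) := by
  obtain ⟨f₁, hf₁, hmap⟩ := exists_map_wordIdealAux_eq (B := B) L j I o
  obtain ⟨f₂, hf₂, s, hcompl⟩ := exists_isComplAway_restrictSupport (wordIdealAux L j I o)
  refine ⟨f₁ * f₂, mul_ne_zero hf₁ hf₂, s, fun ev _ hev => ?_⟩
  rw [map_mul, IsUnit.mul_iff] at hev
  rw [← hmap ev hev.1]
  exact hcompl.isCompl_restrictSupport hev.2

end Specialization

lemma comap_sup_map_of_surjective {S R : Type*} [CommRing S] [CommRing R] {g : S →+* R}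
    (hg : Function.Surjective g) (J : Ideal R) (I : Ideal S) :
    (J ⊔ I.map g).comap g = J.comap g ⊔ I := by
  conv_lhs => rw [← Ideal.map_comap_of_surjective g hg J, ← Ideal.map_sup,
    Ideal.comap_map_of_surjective g hg]
  exact sup_eq_left.2 ((Ideal.comap_mono bot_le).trans le_sup_left)

lemma comap_wordIdealAux {S R : Type*} [CommRing S] [CommRing R] {g : S →+* R}
    (hg : Function.Surjective g) (L : ℕ → S) (j : ℕ) (J : Ideal R) (o : List Bool) :
    (wordIdealAux (fun t => g (L t)) j J o).comap g = wordIdealAux L j (J.comap g) o := by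
  induction o generalizing j J with
  | nil => rfl
  | cons a o ih =>
    rw [wordIdealAux, wordIdealAux, ih]
    congr 1
    cases a with
    | false =>
      rw [if_neg Bool.false_ne_true, if_neg Bool.false_ne_true, ← Set.image_singleton,
        ← Ideal.map_span, comap_sup_map_of_surjective hg]
    | true =>
      ext p
      simp

section Homogeneous

variable {ι τ R : Type*} [DecidableEq ι] [AddRightCancelMonoid ι] [CommRing R]
  [SetLike τ R] [AddSubmonoidClass τ R] (𝒜 : ι → τ) [GradedRing 𝒜]

lemma isHomogeneous_colon_span_singleton {I : Ideal R} (hI : I.IsHomogeneous 𝒜) {l : R}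
    (hl : SetLike.IsHomogeneousElem 𝒜 l) : (I.colon (Ideal.span {l})).IsHomogeneous 𝒜 := by
  obtain ⟨i, hl⟩ := hl
  intro d p hp
  rw [Ideal.mem_colon_span_singleton] at hp ⊢
  rw [← DirectSum.coe_decompose_mul_add_of_right_mem 𝒜 hl]
  exact hI _ hp

lemma isHomogeneous_wordIdealAux {l : ℕ → R} (hl : ∀ t, SetLike.IsHomogeneousElem 𝒜 (l t)) (j : ℕ)
    {I : Ideal R} (hI : I.IsHomogeneous 𝒜) (o : List Bool) :
    (wordIdealAux l j I o).IsHomogeneous 𝒜 := by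
  induction o generalizing j I with
  | nil => exact hI
  | cons a _ ih =>
    refine ih (j + 1) ?_
    cases a with
    | false =>
      exact hI.sup (Ideal.homogeneous_span 𝒜 _ fun x hx => Set.mem_singleton_iff.1 hx ▸ hl j)
    | true => exact isHomogeneous_colon_span_singleton 𝒜 hI (hl j)

end Homogeneous

end WordIdeal

section HilbertFunction

section GradedModule

variable {ι K M : Type*} [DecidableEq ι] [Ring K] [AddCommGroup M] [Module K M]
  (ℳ : ι → Submodule K M) [DirectSum.Decomposition ℳ]

lemma isHomogeneous_span {s : Set M} (hs : ∀ x ∈ s, SetLike.IsHomogeneousElem ℳ x) :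
    (Submodule.span K s).IsHomogeneous ℳ := by
  intro d x hx
  induction hx using Submodule.span_induction with
  | mem x hx =>
    obtain ⟨i, hi⟩ := hs x hx
    rw [DirectSum.decompose_of_mem ℳ hi, DirectSum.coe_of_apply]
    split_ifs
    · exact Submodule.subset_span hx
    · exact Submodule.zero_mem _
  | zero => simp
  | add x y _ _ hx hy => simpa using Submodule.add_mem _ hx hy
  | smul a x _ hx => simpa [DirectSum.smul_apply] using Submodule.smul_mem _ a hx

lemma isCompl_comap_subtype_of_isHomogeneous {P Q : Submodule K M} (hP : P.IsHomogeneous ℳ)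
    (hQ : Q.IsHomogeneous ℳ) (h : IsCompl P Q) (d : ι) :
    IsCompl (P.comap (ℳ d).subtype) (Q.comap (ℳ d).subtype) := by
  refine ⟨Submodule.disjoint_def.2 fun x hxP hxQ =>
    Subtype.ext (Submodule.disjoint_def.1 h.disjoint _ hxP hxQ),
    codisjoint_iff.2 (eq_top_iff.2 fun x _ => ?_)⟩
  obtain ⟨p, hp, q, hq, hpq⟩ : ∃ p ∈ P, ∃ q ∈ Q, p + q = x :=
    Submodule.mem_sup.1 (h.sup_eq_top ▸ Submodule.mem_top)
  refine Submodule.mem_sup.2 ⟨_, hP d hp, _, hQ d hq, ?_⟩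
  rw [← DirectSum.add_apply, ← DirectSum.decompose_add, hpq, DirectSum.decompose_coe,
    DirectSum.of_eq_same]

end GradedModule

lemma isCompl_map_of_isCompl_comap {K M N : Type*} [Ring K] [AddCommGroup M] [Module K M]
    [AddCommGroup N] [Module K N] {g : M →ₗ[K] N} (hg : Function.Surjective g)
    {P : Submodule K N} {Q : Submodule K M} (h : IsCompl (P.comap g) Q) :
    IsCompl P (Q.map g) := by
  constructor
  · refine Submodule.disjoint_def.2 ?_
    rintro _ hP ⟨q, hq, rfl⟩
    rw [Submodule.disjoint_def.1 h.disjoint q hP hq, map_zero]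
  · rw [codisjoint_iff, ← Submodule.map_comap_eq_of_surjective hg P, ← Submodule.map_sup,
      h.sup_eq_top, Submodule.map_top, LinearMap.range_eq_top.2 hg]

open MvPolynomial

lemma isHomogeneous_map_restrictSupport {ι σ K R : Type*} [DecidableEq ι] [AddMonoid ι]
    [CommRing K] [CommRing R] [Algebra K R] (𝒜 : ι → Submodule K R) [GradedAlgebra 𝒜]
    {g : MvPolynomial σ K →ₐ[K] R} (hgX : ∀ i, SetLike.IsHomogeneousElem 𝒜 (g (X i)))
    (s : Set (σ →₀ ℕ)) : ((restrictSupport K s).map g.toLinearMap).IsHomogeneous 𝒜 := by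
  rw [restrictSupport_eq_span, Submodule.map_span]
  refine isHomogeneous_span 𝒜 ?_
  rintro _ ⟨_, ⟨e, -, rfl⟩, rfl⟩
  beta_reduce
  rw [AlgHom.toLinearMap_apply, monomial_eq, C_1, one_mul, Finsupp.prod, map_prod]
  refine prod_mem (S := SetLike.homogeneousSubmonoid 𝒜) fun i _ => ?_
  rw [map_pow]
  exact pow_mem (S := SetLike.homogeneousSubmonoid 𝒜) (hgX i) _

lemma homDim_eq_finrank_quotient {σ K R : Type*} [Field K] [CommRing R] [Algebra K R]
    (𝒜 : ℕ → Submodule K R) [GradedAlgebra 𝒜] {g : MvPolynomial σ K →ₐ[K] R}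
    (hg : Function.Surjective g) (hgX : ∀ i, SetLike.IsHomogeneousElem 𝒜 (g (X i)))
    {I : Ideal R} (hI : I.IsHomogeneous 𝒜) {s : Set (σ →₀ ℕ)}
    (h : IsCompl ((I.comap g).restrictScalars K) (restrictSupport K s)) (d : ℕ) :
    homDim 𝒜 I d = Module.finrank K
      (𝒜 d ⧸ ((restrictSupport K s).map g.toLinearMap).comap (𝒜 d).subtype) := by
  have hcompl : IsCompl (I.restrictScalars K) ((restrictSupport K s).map g.toLinearMap) :=
    isCompl_map_of_isCompl_comap hg h
  have hcompl_d := isCompl_comap_subtype_of_isHomogeneous 𝒜 hI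
    (isHomogeneous_map_restrictSupport 𝒜 hgX s) hcompl d
  exact (Submodule.quotientEquivOfIsCompl _ _ hcompl_d.symm).finrank_eq.symm

end HilbertFunction

section CoordinateRing

section PolyFuns

variable {K E : Type*} [Field K] [AddCommGroup E] [Module K E]

lemma linearMap_mem_polyFuns (φ : E →ₗ[K] K) : ⇑φ ∈ polyFuns K E :=
  Algebra.subset_adjoin ⟨φ, rfl⟩

lemma comp_linearMap_mem_polyFuns {E' : Type*} [AddCommGroup E'] [Module K E'] {F : E → K}
    (hF : F ∈ polyFuns K E) (φ : E' →ₗ[K] E) : F ∘ φ ∈ polyFuns K E' := by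
  induction hF using Algebra.adjoin_induction with
  | mem F hF =>
    obtain ⟨ψ, rfl⟩ := hF
    exact linearMap_mem_polyFuns (ψ ∘ₗ φ)
  | algebraMap c => exact (polyFuns K E').algebraMap_mem c
  | add F G _ _ hF hG => exact add_mem hF hG
  | mul F G _ _ hF hG => exact mul_mem hF hG

lemma isZClosed_setOf_eq_zero {F : E → K} (hF : F ∈ polyFuns K E) :
    IsZClosed K {x | F x = 0} :=
  ⟨{F}, by simpa using hF, by simp⟩

lemma isZOpen_setOf_ne_zero {F : E → K} (hF : F ∈ polyFuns K E) : IsZOpen K {x | F x ≠ 0} := by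
  simpa [IsZOpen, Set.compl_ofPred] using isZClosed_setOf_eq_zero hF

variable {Z : Set E}

namespace IsIrredVariety

lemma exists_mul_ne_zero (hZ : IsIrredVariety K Z) {F G : E → K} (hF : F ∈ polyFuns K E)
    (hG : G ∈ polyFuns K E) (hFZ : ∃ z ∈ Z, F z ≠ 0) (hGZ : ∃ z ∈ Z, G z ≠ 0) :
    ∃ z ∈ Z, F z * G z ≠ 0 := by
  by_contra! hFG
  rcases hZ.2.2 _ _ (isZClosed_setOf_eq_zero hF) (isZClosed_setOf_eq_zero hG)
    fun z hz => mul_eq_zero.1 (hFG z hz) with hsub | hsub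
  · obtain ⟨z, hz, hFz⟩ := hFZ
    exact hFz (hsub hz)
  · obtain ⟨z, hz, hGz⟩ := hGZ
    exact hGz (hsub hz)

lemma exists_prod_ne_zero (hZ : IsIrredVariety K Z) {ι : Type*} (s : Finset ι) {F : ι → E → K}
    (hF : ∀ i ∈ s, F i ∈ polyFuns K E) (hFZ : ∀ i ∈ s, ∃ z ∈ Z, F i z ≠ 0) :
    ∃ z ∈ Z, (∏ i ∈ s, F i) z ≠ 0 := by
  classical
  induction s using Finset.induction_on with
  | empty => simpa using! hZ.2.1
  | insert i s hi ih =>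
    rw [Finset.prod_insert hi]
    simp only [Finset.forall_mem_insert] at hF hFZ
    exact hZ.exists_mul_ne_zero hF.1 (prod_mem hF.2) hFZ.1 (ih hF.2 hFZ.2)

end IsIrredVariety

end PolyFuns

variable (K : Type*) {E : Type*} [Field K] [AddCommGroup E] [Module K E] (Z : Set E)

/-- The coordinate ring of `Z`: the restrictions to `Z` of polynomial functions on the ambient
affine space. -/
def coordRing : Subalgebra K (Z → K) :=
  (polyFuns K E).map (AlgHom.pi fun z : Z => Pi.evalAlgHom K (fun _ : E => K) z)

variable {Z}

/-- Evaluation of regular functions at a point of `Z`. -/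
def coordEval (z : Z) : coordRing K Z →ₐ[K] K :=
  (Pi.evalAlgHom K (fun _ : Z => K) z).comp (coordRing K Z).val

instance (z : Z) : RingHomSurjective (coordEval K z : coordRing K Z →+* K) :=
  ⟨fun c => ⟨algebraMap K _ c, (coordEval K z).commutes c⟩⟩

variable {K}

lemma exists_coordEval_eq {F : E → K} (hF : F ∈ polyFuns K E) :
    ∃ a : coordRing K Z, ∀ z : Z, coordEval K z a = F z :=
  ⟨⟨_, F, hF, rfl⟩, fun _ => rfl⟩

lemma exists_mem_polyFuns_eq_coordEval (a : coordRing K Z) :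
    ∃ F ∈ polyFuns K E, ∀ z : Z, F z = coordEval K z a := by
  obtain ⟨_, F, hF, rfl⟩ := a
  exact ⟨F, hF, fun _ => rfl⟩

lemma coordRing_ne_zero_iff {a : coordRing K Z} : a ≠ 0 ↔ ∃ z : Z, coordEval K z a ≠ 0 := by
  rw [ne_eq, Subtype.ext_iff, funext_iff, not_forall]
  rfl

theorem IsIrredVariety.isDomain_coordRing (hZ : IsIrredVariety K Z) :
    IsDomain (coordRing K Z) := by
  have : Nonempty Z := hZ.2.1.to_subtype
  have : NoZeroDivisors (coordRing K Z) := by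
    refine ⟨fun {a b} hab => ?_⟩
    contrapose! hab
    obtain ⟨F, hF, hFa⟩ := exists_mem_polyFuns_eq_coordEval a
    obtain ⟨G, hG, hGb⟩ := exists_mem_polyFuns_eq_coordEval b
    simp only [coordRing_ne_zero_iff, ← hFa, ← hGb, Subtype.exists, map_mul, exists_prop] at hab ⊢
    exact hZ.exists_mul_ne_zero hF hG hab.1 hab.2
  exact NoZeroDivisors.to_isDomain _

end CoordinateRing

section GenericHilbertFunction

open MvPolynomial

lemma map_coordEval_comp_map_algebraMap {K E σ : Type*} [Field K] [AddCommGroup E] [Module K E]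
    {Z : Set E} (z : Z) :
    (map (coordEval K z : coordRing K Z →+* K)).comp (map (algebraMap K (coordRing K Z))) =
      RingHom.id (MvPolynomial σ K) := by
  ext <;> simp

variable {K E R σ : Type*} [Field K] [AddCommGroup E] [Module K E] [FiniteDimensional K E]
  [CommRing R] [Algebra K R] {g : MvPolynomial σ K →ₐ[K] R}

lemma exists_forall_map_coordEval_eq (hg : Function.Surjective g) (Z : Set E)
    (ℓ : E →ₗ[K] R) :
    ∃ p : MvPolynomial σ (coordRing K Z), ∀ z : Z, g (map (coordEval K z) p) = ℓ z := by
  let b := Module.finBasis K E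
  choose q hq using fun i => hg (ℓ (b i))
  choose a ha using fun i => exists_coordEval_eq (Z := Z) (linearMap_mem_polyFuns (b.coord i))
  refine ⟨∑ i, C (a i) * map (algebraMap K _) (q i), fun z => ?_⟩
  have hq_map (i) : map (coordEval K z : coordRing K Z →+* K) (map (algebraMap K _) (q i)) = q i :=
    DFunLike.congr_fun (map_coordEval_comp_map_algebraMap z) (q i)
  calc g (map (coordEval K z) (∑ i, C (a i) * map (algebraMap K _) (q i)))
      = ∑ i, b.repr z i • ℓ (b i) := by
        simp only [map_sum, map_mul, map_C, hq_map, hq, RingHom.coe_coe, ha, algHom_C,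
          Algebra.smul_def, Module.Basis.coord_apply]
    _ = ℓ z := by simp only [← map_smul, ← map_sum, b.sum_repr]

variable [Finite σ] {Z : Set E}

theorem IsIrredVariety.exists_isCompl_comap_wordIdeal (hZ : IsIrredVariety K Z)
    (hg : Function.Surjective g) (ℓ : ℕ → E →ₗ[K] R) (o : List Bool) :
    ∃ F ∈ polyFuns K E, (∃ z ∈ Z, F z ≠ 0) ∧ ∃ s : Set (σ →₀ ℕ), ∀ z ∈ Z, F z ≠ 0 →
      IsCompl (((wordIdeal (fun t => ℓ t z) o).comap g).restrictScalars K)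
        (restrictSupport K s) := by
  have := hZ.isDomain_coordRing
  choose L hL using fun t => exists_forall_map_coordEval_eq hg Z (ℓ t)
  obtain ⟨f, hf, s, hcompl⟩ := exists_isCompl_wordIdealAux (B := K) L 0
    ((RingHom.ker g).map (map (algebraMap K (coordRing K Z)))) o
  obtain ⟨F, hF, hFf⟩ := exists_mem_polyFuns_eq_coordEval f
  obtain ⟨z₀, hz₀⟩ := coordRing_ne_zero_iff.1 hf
  refine ⟨F, hF, ⟨z₀, z₀.2, hFf z₀ ▸ hz₀⟩, s, fun z hz hFz => ?_⟩
  lift z to Z using hz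
  have hcompl_z := hcompl (coordEval K z) (hFf z ▸ hFz).isUnit
  rw [Ideal.map_map, map_coordEval_comp_map_algebraMap, Ideal.map_id] at hcompl_z
  have hcomap : (wordIdeal (fun t => ℓ t z) o).comap g =
      wordIdealAux (fun t => map (coordEval K z) (L t)) 0 (RingHom.ker g) o := by
    simp only [← hL]
    exact comap_wordIdealAux (g := (g : MvPolynomial σ K →+* R)) hg _ 0 ⊥ o
  rwa [hcomap]

theorem IsIrredVariety.exists_homDim_wordIdeal_eq (hZ : IsIrredVariety K Z)
    (hg : Function.Surjective g) (𝒜 : ℕ → Submodule K R) [GradedAlgebra 𝒜]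
    (hgX : ∀ i, SetLike.IsHomogeneousElem 𝒜 (g (X i))) {ℓ : ℕ → E →ₗ[K] R}
    (hℓ : ∀ t z, SetLike.IsHomogeneousElem 𝒜 (ℓ t z)) (o : List Bool) :
    ∃ F ∈ polyFuns K E, (∃ z ∈ Z, F z ≠ 0) ∧ ∃ H : ℕ → ℕ, ∀ z ∈ Z, F z ≠ 0 →
      ∀ d, homDim 𝒜 (wordIdeal (fun t => ℓ t z) o) d = H d := by
  obtain ⟨F, hF, hFZ, s, hcompl⟩ := hZ.exists_isCompl_comap_wordIdeal hg ℓ o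
  exact ⟨F, hF, hFZ, _, fun z hz hFz => homDim_eq_finrank_quotient 𝒜 hg hgX
    (isHomogeneous_wordIdealAux 𝒜 (fun t => hℓ t z) 0 (Ideal.IsHomogeneous.bot 𝒜) o)
    (hcompl z hz hFz)⟩

end GenericHilbertFunction

section OrderIndependence

variable {K R : Type*} [Field K] [CommRing R] [Algebra K R]

/-- The `t`-th form of a tuple as a linear function of the tuple, `0` beyond the last one. -/
def formAt (𝒜 : ℕ → Submodule K R) (e r t : ℕ) : (Fin r → 𝒜 e) →ₗ[K] R :=
  if h : t < r then (𝒜 e).subtype ∘ₗ LinearMap.proj ⟨t, h⟩ else 0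

lemma formAt_apply (𝒜 : ℕ → Submodule K R) {e r : ℕ} (t : ℕ) (x : Fin r → 𝒜 e) :
    formAt 𝒜 e r t x = if h : t < r then (x ⟨t, h⟩ : R) else 0 := by
  unfold formAt
  split_ifs <;> rfl

lemma formAt_mem (𝒜 : ℕ → Submodule K R) {e r : ℕ} (t : ℕ) (x : Fin r → 𝒜 e) :
    formAt 𝒜 e r t x ∈ 𝒜 e := by
  rw [formAt_apply]
  split_ifs with h
  · exact (x ⟨t, h⟩).2
  · exact zero_mem _

theorem cor_order_independence_general (𝒜 : ℕ → Submodule K R) [GradedAlgebra 𝒜]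
    {τ : Type*} [Finite τ] {g : MvPolynomial τ K →ₐ[K] R} (hg : Function.Surjective g)
    (hgX : ∀ i, SetLike.IsHomogeneousElem 𝒜 (g (MvPolynomial.X i)))
    {e r : ℕ} [FiniteDimensional K (𝒜 e)] {Z : Set (Fin r → 𝒜 e)} (hZ : IsIrredVariety K Z)
    (hZperm : ∀ x ∈ Z, ∀ σ : Equiv.Perm (Fin r), x ∘ σ ∈ Z) (o : List Bool) :
    ∃ U : Set (Fin r → 𝒜 e),
      (∃ W : Set (Fin r → 𝒜 e), IsZOpen K W ∧ U = Z ∩ W) ∧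
      U.Nonempty ∧
      ∀ x ∈ U, ∀ σ : Equiv.Perm (Fin r), ∀ j : ℕ,
        homDim 𝒜 (wordIdeal (fun t => if h : t < r then (x (σ ⟨t, h⟩) : R) else 0) o) j =
          homDim 𝒜 (wordIdeal (fun t => if h : t < r then (x ⟨t, h⟩ : R) else 0) o) j := by
  obtain ⟨F, hF, ⟨z, hz, hFz⟩, H, hH⟩ := hZ.exists_homDim_wordIdeal_eq hg 𝒜 hgX
    (fun t x => ⟨e, formAt_mem 𝒜 t x⟩) o
  simp only [formAt_apply] at hH
  let Fperm (σ : Equiv.Perm (Fin r)) : (Fin r → 𝒜 e) → K := F ∘ LinearMap.funLeft K (𝒜 e) σ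
  have hFperm : ∀ σ, Fperm σ ∈ polyFuns K _ := fun σ => comp_linearMap_mem_polyFuns hF _
  have hFperm_ne : ∀ σ, ∃ x ∈ Z, Fperm σ x ≠ 0 := fun σ =>
    ⟨z ∘ σ.symm, hZperm z hz σ.symm, by
      simpa [Fperm, LinearMap.funLeft, Function.comp_assoc] using hFz⟩
  refine ⟨_, ⟨_, isZOpen_setOf_ne_zero (prod_mem fun σ (_ : σ ∈ Finset.univ) => hFperm σ), rfl⟩,
    hZ.exists_prod_ne_zero Finset.univ (fun σ _ => hFperm σ) fun σ _ => hFperm_ne σ, ?_⟩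
  rintro x ⟨hxZ, hx⟩ σ j
  have hgood : ∀ σ, Fperm σ x ≠ 0 := by
    simpa [Finset.prod_ne_zero_iff] using hx
  exact (hH (x ∘ σ) (hZperm x hxZ σ) (hgood σ) j).trans (hH x hxZ (hgood 1) j).symm

end OrderIndependence

/-- **Corollary (order independence).** Let `R = K[X_1,…,X_n]/J` be a standard graded
algebra over an infinite field `K` (presented by a graded surjection `g`), let
`V ⊆ 𝔸(R_1)` be an irreducible variety with `V^r` irreducible, and let `o` be a word in
`{c,s}` of length `≤ r`.  Then there is a nonempty Zariski open subset `U` of `V^r`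
such that for every tuple in `U` and every permutation `σ` of the `r` forms the
Hilbert function of `I_{σ(l),o}` equals that of `I_{l,o}`. -/
theorem cor_order_independence
    {K R : Type*} [Field K] [Infinite K] [CommRing R] [Algebra K R]
    (𝒜 : ℕ → Submodule K R) [GradedAlgebra 𝒜]
    (h0 : 𝒜 0 = (1 : Submodule K R)) (hstd : ∀ n, 𝒜 (n + 1) = 𝒜 1 * 𝒜 n)
    [FiniteDimensional K (𝒜 1)]
    (n : ℕ) (g : MvPolynomial (Fin n) K →ₐ[K] R) (hg : Function.Surjective g)
    (hgX : ∀ i, g (MvPolynomial.X i) ∈ 𝒜 1)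
    (V : Set (𝒜 1)) (hV : IsIrredVariety K V)
    (r : ℕ) (hVr : IsIrredVariety K {x : Fin r → 𝒜 1 | ∀ t, x t ∈ V})
    (o : List Bool) (ho : o.length ≤ r) :
    ∃ U : Set (Fin r → 𝒜 1),
      (∃ W : Set (Fin r → 𝒜 1), IsZOpen K W ∧ U = {x | ∀ t, x t ∈ V} ∩ W) ∧
      U.Nonempty ∧
      ∀ x ∈ U, ∀ σ : Equiv.Perm (Fin r), ∀ j : ℕ,
        homDim 𝒜 (wordIdeal (fun t => if h : t < r then (x (σ ⟨t, h⟩) : R) else 0) o) j =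
          homDim 𝒜 (wordIdeal (fun t => if h : t < r then (x ⟨t, h⟩ : R) else 0) o) j := by
  exact cor_order_independence_general 𝒜 hg (fun i => ⟨1, hgX i⟩) hVr
    (fun _ hx σ t => hx (σ t)) o
end
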